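/- arXiv:1511.09033 — 9 statements merged into one kernel-verified Lean document; each statement's English description precedes it below -/
import Mathlib

section
/- Fix b ∈ ℝ^c and consider the cross-entropy loss as a function of F ∈ ℝ^{d×c}. For any F and any direction matrix Ψ = [ψ_1,…,ψ_c] ∈ ℝ^{d×c}, the second directional derivative of L at F in direction Ψ (the Hessian quadratic form ψᵀ(∂²L/∂F∂F)ψ, where ψ is the vectorization of Ψ) equals Σ_{j=1}^{c} Σ_{j'=j+1}^{c} (ψ_j − ψ_{j'})ᵀ ( Σ_{i=1}^{n} p_i(j) p_i(j') d_i d_iᵀ ) (ψ_j − ψ_{j'}), where p_i(j) are the softmax probabilities computed at (F, b). -/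
open Matrix Finset Real

/-- Softmax cross-entropy loss `L(F, b, D, y) = -∑ i, log p_i(y_i)`. -/
noncomputable def celoss {d n c : ℕ} (D : Matrix (Fin d) (Fin n) ℝ) (y : Fin n → Fin c)
    (F : Matrix (Fin d) (Fin c) ℝ) (b : Fin c → ℝ) : ℝ :=
  -∑ i : Fin n, Real.log
    (Real.exp ((∑ u : Fin d, D u i * F u (y i)) + b (y i)) /
     ∑ j : Fin c, Real.exp ((∑ u : Fin d, D u i * F u j) + b j))

/-- Softmax probabilities `p_i(j)`. -/
noncomputable def softp {d n c : ℕ} (D : Matrix (Fin d) (Fin n) ℝ)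
    (F : Matrix (Fin d) (Fin c) ℝ) (b : Fin c → ℝ) (i : Fin n) (j : Fin c) : ℝ :=
  Real.exp ((∑ u : Fin d, D u i * F u j) + b j) /
    ∑ k : Fin c, Real.exp ((∑ u : Fin d, D u i * F u k) + b k)

lemma aux_pairs {c : ℕ} (g : Fin c → Fin c → ℝ) (hs : ∀ i j, g i j = g j i) (h0 : ∀ i, g i i = 0) :
    ∑ j, ∑ k, g j k = 2 * ∑ j, ∑ k ∈ Finset.Ioi j, g j k := by
  have h1 : ∀ j, ∑ k, g j k = ∑ k ∈ Finset.Ioi j, g j k + ∑ k ∈ Finset.Iio j, g j k := by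
    intro j
    have hI : (Finset.univ : Finset (Fin c)) = insert j (Finset.Ioi j ∪ Finset.Iio j) := by
      ext k
      simp only [Finset.mem_univ, Finset.mem_insert, Finset.mem_union, Finset.mem_Ioi,
        Finset.mem_Iio, true_iff]
      rcases lt_trichotomy j k with h | h | h
      · exact Or.inr (Or.inl h)
      · exact Or.inl h.symm
      · exact Or.inr (Or.inr h)
    rw [hI, Finset.sum_insert (by simp), h0, zero_add, Finset.sum_union]
    rw [Finset.disjoint_left]
    intro k hk hk'
    simp only [Finset.mem_Ioi, Finset.mem_Iio] at hk hk'
    exact lt_asymm hk hk'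
  have h2 : ∑ j, ∑ k ∈ Finset.Iio j, g j k = ∑ j, ∑ k ∈ Finset.Ioi j, g j k := by
    rw [Finset.sum_comm' (t' := Finset.univ) (s' := fun k => Finset.Ioi k) (by simp)]
    refine Finset.sum_congr rfl fun j _ => Finset.sum_congr rfl fun k _ => hs _ _
  rw [Finset.sum_congr rfl fun j _ => h1 j, Finset.sum_add_distrib, h2]
  ring

lemma aux_lagrange {c : ℕ} (w s : Fin c → ℝ) :
    ∑ j, ∑ k ∈ Finset.Ioi j, w j * w k * (s j - s k) ^ 2 =
      (∑ j, w j * s j ^ 2) * (∑ j, w j) - (∑ j, w j * s j) ^ 2 := by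
  have h := aux_pairs (fun j k => w j * w k * (s j - s k) ^ 2) (fun _ _ => by ring)
    (fun _ => by ring)
  have e : ∑ j, ∑ k, w j * w k * (s j - s k) ^ 2 =
      (∑ j, w j * s j ^ 2) * (∑ j, w j) + (∑ j, w j) * (∑ j, w j * s j ^ 2)
        - 2 * ((∑ j, w j * s j) * (∑ j, w j * s j)) := by
    rw [Finset.sum_mul_sum, Finset.sum_mul_sum, Finset.sum_mul_sum]
    simp only [Finset.mul_sum, ← Finset.sum_add_distrib,
      ← Finset.sum_sub_distrib]
    refine Finset.sum_congr rfl fun j _ => Finset.sum_congr rfl fun k _ => by ring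
  linarith

lemma aux_quad {d n : ℕ} (D : Matrix (Fin d) (Fin n) ℝ) (p : Fin n → ℝ) (v : Fin d → ℝ) :
    v ⬝ᵥ ((∑ i : Fin n, p i • Matrix.vecMulVec (fun u => D u i) (fun u => D u i)) *ᵥ v) =
      ∑ i, p i * (∑ u, D u i * v u) ^ 2 := by
  rw [Matrix.sum_mulVec, dotProduct_sum]
  refine Finset.sum_congr rfl fun i _ => ?_
  rw [Matrix.smul_mulVec, dotProduct_smul, Matrix.vecMulVec_mulVec, smul_eq_mul]
  have h : v ⬝ᵥ (fun u => D u i) = ∑ u, D u i * v u := by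
    simp only [dotProduct]
    exact Finset.sum_congr rfl fun _ _ => mul_comm _ _
  rw [dotProduct_smul, h]
  simp only [dotProduct, MulOpposite.smul_eq_mul_unop, MulOpposite.unop_op]
  ring

lemma aux_exp {c : ℕ} (m a s : Fin c → ℝ) (t : ℝ) :
    HasDerivAt (fun t => ∑ j, m j * Real.exp (a j + t * s j))
      (∑ j, (m j * s j) * Real.exp (a j + t * s j)) t := by
  refine HasDerivAt.fun_sum fun j _ => ?_
  have h : HasDerivAt (fun t : ℝ => a j + t * s j) (s j) t := by
    simpa using ((hasDerivAt_id t).mul_const (s j)).const_add (a j)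
  refine (h.exp.const_mul (m j)).congr_deriv ?_
  ring

lemma aux_deriv {n c : ℕ} (y : Fin n → Fin c) (a s : Fin n → Fin c → ℝ) :
    iteratedDeriv 2 (fun t : ℝ => -∑ i, Real.log (Real.exp (a i (y i) + t * s i (y i)) /
        ∑ j, Real.exp (a i j + t * s i j))) 0 =
      ∑ i, ∑ j, ∑ k ∈ Finset.Ioi j, ((Real.exp (a i j) / ∑ l, Real.exp (a i l)) *
        (Real.exp (a i k) / ∑ l, Real.exp (a i l))) * (s i j - s i k) ^ 2 := by
  have hZ : ∀ i t, 0 < ∑ j, Real.exp (a i j + t * s i j) := fun i t =>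
    Finset.sum_pos (fun j _ => Real.exp_pos _) ⟨y i, Finset.mem_univ _⟩
  have hf : (fun t : ℝ => -∑ i, Real.log (Real.exp (a i (y i) + t * s i (y i)) /
        ∑ j, Real.exp (a i j + t * s i j))) =
      fun t => ∑ i, (Real.log (∑ j, Real.exp (a i j + t * s i j)) -
        (a i (y i) + t * s i (y i))) := by
    funext t
    rw [← Finset.sum_neg_distrib]
    refine Finset.sum_congr rfl fun i _ => ?_
    rw [Real.log_div (Real.exp_pos _).ne' (hZ i t).ne', Real.log_exp]
    ring
  have h0 : ∀ i t, HasDerivAt (fun t => ∑ j, Real.exp (a i j + t * s i j))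
      (∑ j, s i j * Real.exp (a i j + t * s i j)) t := fun i t => by
    simpa using aux_exp (fun _ => 1) (a i) (s i) t
  have h1 : deriv (fun t => ∑ i, (Real.log (∑ j, Real.exp (a i j + t * s i j)) -
        (a i (y i) + t * s i (y i)))) = fun t => ∑ i,
        ((∑ j, s i j * Real.exp (a i j + t * s i j)) / (∑ j, Real.exp (a i j + t * s i j))
          - s i (y i)) := by
    funext t
    refine HasDerivAt.deriv (HasDerivAt.fun_sum fun i _ => ?_)
    refine ((h0 i t).log (hZ i t).ne').sub ?_
    simpa using ((hasDerivAt_id t).mul_const (s i (y i))).const_add (a i (y i))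
  rw [iteratedDeriv_succ, iteratedDeriv_one, hf, h1]
  refine HasDerivAt.deriv (HasDerivAt.fun_sum fun i _ => ?_)
  have h2 := ((aux_exp (s i) (a i) (s i) 0).div (h0 i 0) (hZ i 0).ne').sub_const (s i (y i))
  have hz := hZ i 0
  refine h2.congr_deriv ?_
  simp only [zero_mul, add_zero] at hz ⊢
  rw [aux_lagrange, ← Finset.sum_div]
  have e1 : ∑ j, Real.exp (a i j) / (∑ l, Real.exp (a i l)) * s i j ^ 2 =
      (∑ j, s i j * s i j * Real.exp (a i j)) / ∑ l, Real.exp (a i l) := by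
    rw [Finset.sum_div]
    exact Finset.sum_congr rfl fun _ _ => by ring
  have e2 : ∑ j, Real.exp (a i j) / (∑ l, Real.exp (a i l)) * s i j =
      (∑ j, s i j * Real.exp (a i j)) / ∑ l, Real.exp (a i l) := by
    rw [Finset.sum_div]
    exact Finset.sum_congr rfl fun _ _ => by ring
  rw [e1, e2]
  field_simp

/-- The second directional derivative of the cross-entropy loss at `F` in direction `Ψ`
equals `∑_{j < j'} (ψ_j − ψ_{j'})ᵀ (∑_i p_i(j) p_i(j') d_i d_iᵀ) (ψ_j − ψ_{j'})`. -/
theorem multiverse_stmt2 {d n c : ℕ} (D : Matrix (Fin d) (Fin n) ℝ) (y : Fin n → Fin c)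
    (F Ψ : Matrix (Fin d) (Fin c) ℝ) (b : Fin c → ℝ) :
    iteratedDeriv 2 (fun t : ℝ => celoss D y (F + t • Ψ) b) 0 =
      ∑ j : Fin c, ∑ j' ∈ Finset.Ioi j,
        (fun u => Ψ u j - Ψ u j') ⬝ᵥ
          ((∑ i : Fin n, (softp D F b i j * softp D F b i j') •
              Matrix.vecMulVec (fun u => D u i) (fun u => D u i)) *ᵥ
            fun u => Ψ u j - Ψ u j') := by
  have hlin : ∀ (t : ℝ) (i : Fin n) (j : Fin c),
      (∑ u : Fin d, D u i * (F + t • Ψ) u j) + b j =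
        ((∑ u : Fin d, D u i * F u j) + b j) + t * ∑ u : Fin d, D u i * Ψ u j := by
    intro t i j
    have : ∑ u : Fin d, D u i * (F + t • Ψ) u j =
        (∑ u : Fin d, D u i * F u j) + t * ∑ u : Fin d, D u i * Ψ u j := by
      rw [Finset.mul_sum, ← Finset.sum_add_distrib]
      refine Finset.sum_congr rfl fun u _ => ?_
      simp only [Matrix.add_apply, Matrix.smul_apply, smul_eq_mul]
      ring
    rw [this]
    ring
  simp only [celoss, hlin]
  rw [aux_deriv y (fun i j => (∑ u : Fin d, D u i * F u j) + b j)
    (fun i j => ∑ u : Fin d, D u i * Ψ u j), Finset.sum_comm]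
  refine Finset.sum_congr rfl fun j _ => ?_
  rw [Finset.sum_comm]
  refine Finset.sum_congr rfl fun k _ => ?_
  rw [aux_quad]
  refine Finset.sum_congr rfl fun i _ => ?_
  simp only [softp, mul_sub, Finset.sum_sub_distrib]
end

section
/- Suppose the data matrix D ∈ ℝ^{d×n} has full row rank d (equivalently K = Σ_i d_i d_iᵀ is positive definite). Then for any F ∈ ℝ^{d×c}, b ∈ ℝ^c, and any Ψ = [ψ_1,…,ψ_c] ∈ ℝ^{d×c}, the quadratic form Σ_{j=1}^{c} Σ_{j'=j+1}^{c} (ψ_j − ψ_{j'})ᵀ ( Σ_{i=1}^{n} p_i(j) p_i(j') d_i d_iᵀ ) (ψ_j − ψ_{j'}) is nonnegative, and it equals zero if and only if ψ_1 = ψ_2 = ⋯ = ψ_c. -/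
open Matrix Finset Real

lemma quad_form_eq {d n : ℕ} (D : Matrix (Fin d) (Fin n) ℝ) (w : Fin n → ℝ) (v : Fin d → ℝ) :
    v ⬝ᵥ ((∑ i : Fin n, w i • Matrix.vecMulVec (fun u => D u i) (fun u => D u i)) *ᵥ v) =
      ∑ i : Fin n, w i * (v ⬝ᵥ fun u => D u i) ^ 2 := by
  rw [Matrix.sum_mulVec, dotProduct_sum]
  refine Finset.sum_congr rfl fun i _ => ?_
  rw [Matrix.smul_mulVec, Matrix.vecMulVec_mulVec, dotProduct_smul]
  simp only [dotProduct_smul, smul_eq_mul, MulOpposite.smul_eq_mul_unop, MulOpposite.unop_op]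
  rw [dotProduct_comm (fun u => D u i) v]
  ring

lemma softp_pos {d n c : ℕ} (D : Matrix (Fin d) (Fin n) ℝ)
    (F : Matrix (Fin d) (Fin c) ℝ) (b : Fin c → ℝ) (i : Fin n) (j : Fin c) :
    0 < softp D F b i j :=
  div_pos (Real.exp_pos _) (Finset.sum_pos (fun _ _ => Real.exp_pos _) ⟨j, Finset.mem_univ j⟩)

/-- If `K = ∑ i, d_i d_iᵀ` is positive definite, then the Hessian quadratic form
`∑_{j < j'} (ψ_j − ψ_{j'})ᵀ (∑_i p_i(j) p_i(j') d_i d_iᵀ) (ψ_j − ψ_{j'})` is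
nonnegative, and vanishes iff `ψ_1 = ⋯ = ψ_c`. -/
theorem multiverse_stmt4 {d n c : ℕ} (D : Matrix (Fin d) (Fin n) ℝ) (y : Fin n → Fin c)
    (F Ψ : Matrix (Fin d) (Fin c) ℝ) (b : Fin c → ℝ)
    (hK : ∀ v : Fin d → ℝ, v ≠ 0 →
      0 < v ⬝ᵥ ((∑ i : Fin n, Matrix.vecMulVec (fun u => D u i) (fun u => D u i)) *ᵥ v)) :
    (0 ≤ ∑ j : Fin c, ∑ j' ∈ Finset.Ioi j,
        (fun u => Ψ u j - Ψ u j') ⬝ᵥ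
          ((∑ i : Fin n, (softp D F b i j * softp D F b i j') •
              Matrix.vecMulVec (fun u => D u i) (fun u => D u i)) *ᵥ
            fun u => Ψ u j - Ψ u j')) ∧
    ((∑ j : Fin c, ∑ j' ∈ Finset.Ioi j,
        (fun u => Ψ u j - Ψ u j') ⬝ᵥ
          ((∑ i : Fin n, (softp D F b i j * softp D F b i j') •
              Matrix.vecMulVec (fun u => D u i) (fun u => D u i)) *ᵥ
            fun u => Ψ u j - Ψ u j')) = 0 ↔
      ∀ j j' : Fin c, ∀ u : Fin d, Ψ u j = Ψ u j') := by
  have hK' : ∀ v : Fin d → ℝ, (∀ i, (v ⬝ᵥ fun u => D u i) = 0) → v = 0 := by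
    intro v hv
    by_contra hne
    have h := hK v hne
    have e := quad_form_eq D (fun _ => 1) v
    simp only [one_smul] at e
    rw [e] at h
    simp [hv] at h
  simp only [quad_form_eq D (fun i => softp D F b i _ * softp D F b i _)]
  have hw : ∀ i j j', 0 < softp D F b i j * softp D F b i j' := fun i j j' =>
    mul_pos (softp_pos D F b i j) (softp_pos D F b i j')
  have h1 : ∀ j j' i, 0 ≤ softp D F b i j * softp D F b i j' *
      ((fun u => Ψ u j - Ψ u j') ⬝ᵥ fun u => D u i) ^ 2 := fun j j' i =>
    mul_nonneg (hw i j j').le (sq_nonneg _)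
  have h2 := fun j j' => Finset.sum_nonneg (s := Finset.univ) fun i _ => h1 j j' i
  have h3 := fun j => Finset.sum_nonneg (s := Finset.Ioi j) fun j' _ => h2 j j'
  refine ⟨Finset.sum_nonneg fun j _ => h3 j, ?_, ?_⟩
  · intro h
    have key : ∀ j j' : Fin c, j < j' → ∀ u, Ψ u j = Ψ u j' := by
      intro j j' hjj u
      have a := (Finset.sum_eq_zero_iff_of_nonneg fun j _ => h3 j).1 h j (Finset.mem_univ j)
      have a := (Finset.sum_eq_zero_iff_of_nonneg fun j' _ => h2 j j').1 a j'
        (Finset.mem_Ioi.2 hjj)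
      have a := (Finset.sum_eq_zero_iff_of_nonneg fun i _ => h1 j j' i).1 a
      have z := hK' (fun u => Ψ u j - Ψ u j') fun i => by
        have q := a i (Finset.mem_univ i)
        exact pow_eq_zero_iff two_ne_zero |>.1 ((mul_eq_zero.1 q).resolve_left (hw i j j').ne')
      exact sub_eq_zero.1 (congrFun z u)
    intro j j' u
    rcases lt_trichotomy j j' with hlt | rfl | hlt
    · exact key j j' hlt u
    · rfl
    · exact (key j' j hlt u).symm
  · intro h
    refine Finset.sum_eq_zero fun j _ => Finset.sum_eq_zero fun j' _ =>
      Finset.sum_eq_zero fun i _ => ?_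
    have z : (fun u => Ψ u j - Ψ u j') = 0 := funext fun u => sub_eq_zero.2 (h j j' u)
    rw [z]
    simp
end

section
/- Assume the data matrix D ∈ ℝ^{d×n} has full row rank d, and fix the biases to zero. If F¹ ∈ ℝ^{d×c} and F² ∈ ℝ^{d×c} are both global minimizers of F ↦ L(F, 0, D, y), then there exists a vector v ∈ ℝ^d such that F¹ − F² = v·1_cᵀ, i.e., every column of F¹ − F² equals the same vector v. -/
open Matrix Finset Real

theorem lse_mid {c : ℕ} (j0 : Fin c) (a b : Fin c → ℝ) :
    2 * Real.log (∑ j, Real.exp ((a j + b j) / 2)) ≤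
      Real.log (∑ j, Real.exp (a j)) + Real.log (∑ j, Real.exp (b j)) ∧
    (2 * Real.log (∑ j, Real.exp ((a j + b j) / 2)) =
      Real.log (∑ j, Real.exp (a j)) + Real.log (∑ j, Real.exp (b j)) →
      ∃ t : ℝ, ∀ j, a j - b j = t) := by
  have pos : ∀ z : Fin c → ℝ, 0 < ∑ j, Real.exp (z j) := fun z =>
    Finset.sum_pos (fun j _ => Real.exp_pos _) ⟨j0, Finset.mem_univ _⟩
  have hA := pos a
  have hB := pos b
  have hM := pos (fun j => (a j + b j) / 2)
  set A := ∑ j, Real.exp (a j) with hAd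
  set B := ∑ j, Real.exp (b j) with hBd
  set M := ∑ j, Real.exp ((a j + b j) / 2) with hMd
  have key : ∑ j, (B * Real.exp (a j / 2) - M * Real.exp (b j / 2)) ^ 2 = B * (A * B - M ^ 2) := by
    have h1 : ∀ j, (B * Real.exp (a j / 2) - M * Real.exp (b j / 2)) ^ 2 =
        B ^ 2 * Real.exp (a j) - 2 * B * M * Real.exp ((a j + b j) / 2)
          + M ^ 2 * Real.exp (b j) := by
      intro j
      have e1 : Real.exp (a j) = Real.exp (a j / 2) * Real.exp (a j / 2) := by
        rw [← Real.exp_add]; ring_nf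
      have e2 : Real.exp (b j) = Real.exp (b j / 2) * Real.exp (b j / 2) := by
        rw [← Real.exp_add]; ring_nf
      have e3 : Real.exp ((a j + b j) / 2) = Real.exp (a j / 2) * Real.exp (b j / 2) := by
        rw [← Real.exp_add]; ring_nf
      rw [e1, e2, e3]; ring
    rw [Finset.sum_congr rfl (fun j _ => h1 j), Finset.sum_add_distrib, Finset.sum_sub_distrib,
      ← Finset.mul_sum, ← Finset.mul_sum, ← Finset.mul_sum, ← hAd, ← hBd, ← hMd]
    ring
  have e2 : 2 * Real.log M = Real.log (M ^ 2) := by rw [Real.log_pow]; norm_num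
  rw [e2, ← Real.log_mul hA.ne' hB.ne']
  constructor
  · apply Real.log_le_log (by positivity)
    have h0 : 0 ≤ B * (A * B - M ^ 2) := by
      rw [← key]; exact Finset.sum_nonneg (fun j _ => sq_nonneg _)
    have := nonneg_of_mul_nonneg_right h0 hB
    linarith
  · intro h
    have h' : M ^ 2 = A * B := Real.log_injOn_pos
      (Set.mem_Ioi.2 (by positivity)) (Set.mem_Ioi.2 (by positivity)) h
    rw [h', sub_self, mul_zero, Finset.sum_eq_zero_iff_of_nonneg (fun j _ => sq_nonneg _)] at key
    refine ⟨2 * (Real.log M - Real.log B), fun j => ?_⟩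
    have hj := sub_eq_zero.1 (pow_eq_zero_iff (two_ne_zero) |>.1 (key j (Finset.mem_univ _)))
    have hl := congrArg Real.log hj
    rw [Real.log_mul hB.ne' (Real.exp_pos _).ne', Real.log_mul hM.ne' (Real.exp_pos _).ne',
      Real.log_exp, Real.log_exp] at hl
    linarith

theorem celoss_eq {d n c : ℕ} (D : Matrix (Fin d) (Fin n) ℝ) (y : Fin n → Fin c)
    (F : Matrix (Fin d) (Fin c) ℝ) :
    celoss D y F 0 = ∑ i, (Real.log (∑ j, Real.exp (∑ u, D u i * F u j))
      - ∑ u, D u i * F u (y i)) := by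
  unfold celoss
  rw [← Finset.sum_neg_distrib]
  refine Finset.sum_congr rfl fun i _ => ?_
  have : 0 < ∑ j, Real.exp (∑ u, D u i * F u j) :=
    Finset.sum_pos (fun j _ => Real.exp_pos _) ⟨y i, Finset.mem_univ _⟩
  simp only [Pi.zero_apply, add_zero]
  rw [Real.log_div (Real.exp_pos _).ne' this.ne', Real.log_exp]
  ring

/-- If `D` has full row rank (`K = ∑ d_i d_iᵀ` positive definite) and `F¹, F²` are both
global minimizers of `F ↦ L(F, 0, D, y)`, then `F¹ − F² = v·1_cᵀ` for some `v`. -/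
theorem multiverse_stmt5 {d n c : ℕ} (D : Matrix (Fin d) (Fin n) ℝ) (y : Fin n → Fin c)
    (hK : ∀ v : Fin d → ℝ, v ≠ 0 →
      0 < v ⬝ᵥ ((∑ i : Fin n, Matrix.vecMulVec (fun u => D u i) (fun u => D u i)) *ᵥ v))
    (F1 F2 : Matrix (Fin d) (Fin c) ℝ)
    (hF1 : ∀ F : Matrix (Fin d) (Fin c) ℝ, celoss D y F1 0 ≤ celoss D y F 0)
    (hF2 : ∀ F : Matrix (Fin d) (Fin c) ℝ, celoss D y F2 0 ≤ celoss D y F 0) :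
    ∃ v : Fin d → ℝ, ∀ (j : Fin c) (u : Fin d), F1 u j - F2 u j = v u := by
  classical
  obtain ⟨G, hG⟩ : ∃ G : Matrix (Fin d) (Fin c) ℝ, ∀ u j, G u j = (F1 u j + F2 u j) / 2 :=
    ⟨Matrix.of fun u j => (F1 u j + F2 u j) / 2, fun _ _ => rfl⟩
  have hM : ∀ i j, ∑ u, D u i * G u j
      = ((∑ u, D u i * F1 u j) + (∑ u, D u i * F2 u j)) / 2 := by
    intro i j
    rw [← Finset.sum_add_distrib, Finset.sum_div]
    exact Finset.sum_congr rfl fun u _ => by rw [hG]; ring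
  have h1 := hF1 G
  have h2 := hF2 G
  rw [celoss_eq D y G, celoss_eq] at h1 h2
  simp only [hM] at h1 h2
  have hl := fun i => lse_mid (y i) (fun j => ∑ u, D u i * F1 u j) (fun j => ∑ u, D u i * F2 u j)
  have hg : ∀ i ∈ (Finset.univ : Finset (Fin n)),
      0 ≤ Real.log (∑ j, Real.exp (∑ u, D u i * F1 u j))
      + Real.log (∑ j, Real.exp (∑ u, D u i * F2 u j))
      - 2 * Real.log (∑ j, Real.exp (((∑ u, D u i * F1 u j) + (∑ u, D u i * F2 u j)) / 2)) :=
    fun i _ => sub_nonneg.2 (hl i).1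
  have hs : ∑ i, (Real.log (∑ j, Real.exp (∑ u, D u i * F1 u j))
      + Real.log (∑ j, Real.exp (∑ u, D u i * F2 u j))
      - 2 * Real.log (∑ j, Real.exp (((∑ u, D u i * F1 u j) + (∑ u, D u i * F2 u j)) / 2))) = 0 := by
    apply le_antisymm _ (Finset.sum_nonneg hg)
    simp only [Finset.sum_sub_distrib, Finset.sum_add_distrib, ← Finset.mul_sum,
      ← Finset.sum_div] at h1 h2 ⊢
    linarith
  rw [Finset.sum_eq_zero_iff_of_nonneg hg] at hs
  have hd : ∀ i j k, ∑ u, D u i * ((F1 u j - F2 u j) - (F1 u k - F2 u k)) = 0 := by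
    intro i j k
    obtain ⟨t, ht⟩ := (hl i).2 (sub_eq_zero.1 (hs i (Finset.mem_univ _))).symm
    have hj := ht j
    have hk := ht k
    simp only [mul_sub, Finset.sum_sub_distrib] at hj hk ⊢
    linarith
  have hw : ∀ j k, (fun u => (F1 u j - F2 u j) - (F1 u k - F2 u k)) = 0 := by
    intro j k
    by_contra hne
    have := hK _ hne
    rw [Matrix.sum_mulVec, dotProduct_sum] at this
    refine absurd this (not_lt.2 (le_of_eq (Finset.sum_eq_zero fun i _ => ?_)))
    rw [Matrix.vecMulVec_mulVec]
    have h0 : (fun u => D u i) ⬝ᵥ (fun u => (F1 u j - F2 u j) - (F1 u k - F2 u k)) = 0 := hd i j k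
    rw [h0]
    simp
  rcases isEmpty_or_nonempty (Fin c) with hc | ⟨⟨k⟩⟩
  · exact ⟨0, fun j => hc.elim j⟩
  · exact ⟨fun u => F1 u k - F2 u k, fun j u => sub_eq_zero.1 (congrFun (hw j k) u)⟩
end

section
/- Assume the data matrix D ∈ ℝ^{d×n} has full row rank d, with d < c, and fix the biases to zero. Suppose F¹ = [f¹_1,…,f¹_c] and F² = [f²_1,…,f²_c] are both global minimizers of F ↦ L(F, 0, D, y) satisfying the columnwise orthogonality constraint f¹_jᵀ f²_j = 0 for every j ∈ {1,…,c}. Then there exists a vector v ∈ ℝ^d such that for every j, ‖f¹_j‖² + vᵀ f¹_j = 0; i.e., the over-determined linear system F¹ᵀ v = −(‖f¹_1‖²,…,‖f¹_c‖²)ᵀ has a solution v, so each column f¹_j lies on the hyper-ellipse {x ∈ ℝ^d : xᵀx + vᵀx = 0}. -/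
open Matrix Finset Real

theorem aux_lse {c : ℕ} (a b : Fin c → ℝ) (j0 : Fin c) :
    2 * Real.log (∑ j, Real.exp ((a j + b j) / 2)) ≤
      Real.log (∑ j, Real.exp (a j)) + Real.log (∑ j, Real.exp (b j)) ∧
    (2 * Real.log (∑ j, Real.exp ((a j + b j) / 2)) =
      Real.log (∑ j, Real.exp (a j)) + Real.log (∑ j, Real.exp (b j)) →
      ∀ j, a j - b j = a j0 - b j0) := by
  have hne : (Finset.univ : Finset (Fin c)).Nonempty := ⟨j0, Finset.mem_univ _⟩
  have pos : ∀ f : Fin c → ℝ, 0 < ∑ j, Real.exp (f j) := fun f =>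
    Finset.sum_pos (fun j _ => Real.exp_pos _) hne
  set X := ∑ j, Real.exp ((a j + b j) / 2) with hX
  set A := ∑ j, Real.exp (a j) with hA
  set Y := ∑ j, Real.exp (b j) with hY
  have pX : 0 < X := pos _
  have pA : 0 < A := pos _
  have pY : 0 < Y := pos _
  have key : ∑ j, (Y * Real.exp (a j / 2) - X * Real.exp (b j / 2)) ^ 2 = Y * (Y * A - X ^ 2) := by
    have h1 : ∀ j, (Y * Real.exp (a j / 2) - X * Real.exp (b j / 2)) ^ 2
        = Y ^ 2 * Real.exp (a j) - 2 * X * Y * Real.exp ((a j + b j) / 2)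
          + X ^ 2 * Real.exp (b j) := by
      intro j
      have e1 : Real.exp (a j) = Real.exp (a j / 2) * Real.exp (a j / 2) := by
        rw [← Real.exp_add]; ring_nf
      have e2 : Real.exp (b j) = Real.exp (b j / 2) * Real.exp (b j / 2) := by
        rw [← Real.exp_add]; ring_nf
      have e3 : Real.exp ((a j + b j) / 2) = Real.exp (a j / 2) * Real.exp (b j / 2) := by
        rw [← Real.exp_add]; ring_nf
      rw [e1, e2, e3]; ring
    rw [Finset.sum_congr rfl (fun j _ => h1 j), Finset.sum_add_distrib, Finset.sum_sub_distrib,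
      ← Finset.mul_sum, ← Finset.mul_sum, ← Finset.mul_sum, ← hX, ← hA, ← hY]
    ring
  have hl : 2 * Real.log X = Real.log (X ^ 2) := by rw [Real.log_pow]; norm_num
  have hr : Real.log A + Real.log Y = Real.log (A * Y) := (Real.log_mul pA.ne' pY.ne').symm
  rw [hl, hr]
  constructor
  · apply Real.log_le_log (by positivity)
    have : 0 ≤ Y * (Y * A - X ^ 2) := key ▸ Finset.sum_nonneg (fun j _ => sq_nonneg _)
    have := nonneg_of_mul_nonneg_right this pY
    linarith
  · intro h
    have h2 : X ^ 2 = A * Y := Real.log_injOn_pos (Set.mem_Ioi.2 (by positivity))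
      (Set.mem_Ioi.2 (by positivity)) h
    have h0 : ∑ j, (Y * Real.exp (a j / 2) - X * Real.exp (b j / 2)) ^ 2 = 0 := by
      rw [key, h2]; ring
    have hall : ∀ j, a j - b j = 2 * (Real.log X - Real.log Y) := by
      intro j
      have h3 := (Finset.sum_eq_zero_iff_of_nonneg (fun j _ => sq_nonneg _)).1 h0 j
        (Finset.mem_univ _)
      have h4 : Y * Real.exp (a j / 2) = X * Real.exp (b j / 2) :=
        sub_eq_zero.1 (pow_eq_zero_iff (two_ne_zero) |>.1 h3)
      have h5 := congrArg Real.log h4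
      rw [Real.log_mul pY.ne' (Real.exp_pos _).ne', Real.log_mul pX.ne' (Real.exp_pos _).ne',
        Real.log_exp, Real.log_exp] at h5
      linarith
    intro j
    rw [hall, hall]

theorem aux_celoss {d n c : ℕ} (j0 : Fin c) (D : Matrix (Fin d) (Fin n) ℝ) (y : Fin n → Fin c)
    (F : Matrix (Fin d) (Fin c) ℝ) : celoss D y F 0 =
    ∑ i, (Real.log (∑ j, Real.exp (∑ u, D u i * F u j)) - ∑ u, D u i * F u (y i)) := by
  unfold celoss
  rw [← Finset.sum_neg_distrib]
  refine Finset.sum_congr rfl fun i _ => ?_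
  have : 0 < ∑ j, Real.exp (∑ u, D u i * F u j) :=
    Finset.sum_pos (fun j _ => Real.exp_pos _) ⟨j0, Finset.mem_univ _⟩
  simp only [Pi.zero_apply, add_zero]
  rw [Real.log_div (Real.exp_pos _).ne' this.ne', Real.log_exp]
  ring

/-- If `D` has full row rank, `d < c`, and `F¹, F²` are global minimizers of
`F ↦ L(F, 0, D, y)` with columnwise-orthogonal columns, then there is `v ∈ ℝ^d`
with `‖f¹_j‖² + vᵀ f¹_j = 0` for all `j`, i.e. the over-determined system
`F¹ᵀ v = −(‖f¹_1‖²,…,‖f¹_c‖²)ᵀ` has a solution, so each column of `F¹` lies on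
the hyper-ellipse `{x : xᵀx + vᵀx = 0}`. -/
theorem multiverse_stmt6 {d n c : ℕ} (hdc : d < c)
    (D : Matrix (Fin d) (Fin n) ℝ) (y : Fin n → Fin c)
    (hK : ∀ v : Fin d → ℝ, v ≠ 0 →
      0 < v ⬝ᵥ ((∑ i : Fin n, Matrix.vecMulVec (fun u => D u i) (fun u => D u i)) *ᵥ v))
    (F1 F2 : Matrix (Fin d) (Fin c) ℝ)
    (hF1 : ∀ F : Matrix (Fin d) (Fin c) ℝ, celoss D y F1 0 ≤ celoss D y F 0)
    (hF2 : ∀ F : Matrix (Fin d) (Fin c) ℝ, celoss D y F2 0 ≤ celoss D y F 0)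
    (horth : ∀ j : Fin c, (∑ u : Fin d, F1 u j * F2 u j) = 0) :
    ∃ v : Fin d → ℝ, ∀ j : Fin c,
      (∑ u : Fin d, F1 u j * F1 u j) + (∑ u : Fin d, v u * F1 u j) = 0 := by
  have j0 : Fin c := ⟨d, hdc⟩
  have hz : ∀ i j, ∑ u, D u i * ((1 / 2 : ℝ) • (F1 + F2)) u j =
      ((∑ u, D u i * F1 u j) + ∑ u, D u i * F2 u j) / 2 := by
    intro i j
    rw [← Finset.sum_add_distrib, Finset.sum_div]
    refine Finset.sum_congr rfl fun u _ => ?_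
    simp only [Matrix.smul_apply, Matrix.add_apply, smul_eq_mul]
    ring
  have m1 := hF1 ((1 / 2 : ℝ) • (F1 + F2))
  have m2 := hF2 ((1 / 2 : ℝ) • (F1 + F2))
  rw [aux_celoss j0, aux_celoss j0] at m1 m2
  simp only [hz] at m1 m2
  have hlse := fun i => aux_lse (fun j => ∑ u, D u i * F1 u j) (fun j => ∑ u, D u i * F2 u j) j0
  have hnn : ∀ i ∈ (Finset.univ : Finset (Fin n)), 0 ≤
      Real.log (∑ j, Real.exp (∑ u, D u i * F1 u j))
      + Real.log (∑ j, Real.exp (∑ u, D u i * F2 u j))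
      - 2 * Real.log (∑ j, Real.exp (((∑ u, D u i * F1 u j) + ∑ u, D u i * F2 u j) / 2)) :=
    fun i _ => sub_nonneg.2 (hlse i).1
  have hsum : ∑ i, (Real.log (∑ j, Real.exp (∑ u, D u i * F1 u j))
      + Real.log (∑ j, Real.exp (∑ u, D u i * F2 u j))
      - 2 * Real.log (∑ j, Real.exp (((∑ u, D u i * F1 u j) + ∑ u, D u i * F2 u j) / 2))) = 0 := by
    apply le_antisymm _ (Finset.sum_nonneg hnn)
    simp only [Finset.sum_sub_distrib, Finset.sum_add_distrib, ← Finset.mul_sum,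
      ← Finset.sum_div] at m1 m2 ⊢
    linarith
  have hconst : ∀ i j, (∑ u, D u i * F1 u j) - (∑ u, D u i * F2 u j) =
      (∑ u, D u i * F1 u j0) - (∑ u, D u i * F2 u j0) := by
    intro i
    have h := (Finset.sum_eq_zero_iff_of_nonneg hnn).1 hsum i (Finset.mem_univ _)
    exact (hlse i).2 (by linarith)
  have hx : ∀ j, (fun u => F1 u j - F2 u j - (F1 u j0 - F2 u j0)) = (0 : Fin d → ℝ) := by
    intro j
    by_contra hne
    have h := hK _ hne
    have hD : ∀ i, (fun u => D u i) ⬝ᵥ (fun u => F1 u j - F2 u j - (F1 u j0 - F2 u j0)) = 0 := by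
      intro i
      simp only [dotProduct, mul_sub, Finset.sum_sub_distrib]
      linarith [hconst i j]
    rw [Matrix.sum_mulVec] at h
    simp [Matrix.vecMulVec_mulVec, hD] at h
  refine ⟨fun u => -(F1 u j0 - F2 u j0), fun j => ?_⟩
  rw [← horth j, ← Finset.sum_add_distrib]
  refine Finset.sum_congr rfl fun u _ => ?_
  have h := congrFun (hx j) u
  simp only [Pi.zero_apply] at h
  linear_combination (F1 u j) * h
end

section
/- Let (F*, b*) be a global minimizer of the cross-entropy loss L(·,·,D,y), achieving the minimal value L*(D,y), and let K = Σ_{i=1}^n d_i d_iᵀ. Then for any Ψ = [ψ_1,…,ψ_c] ∈ ℝ^{d×c}, L(F* + Ψ, b*, D, y) ≤ L*(D,y) + (1/2) Σ_{j=1}^{c} Σ_{j'=j+1}^{c} (ψ_j − ψ_{j'})ᵀ K (ψ_j − ψ_{j'}). -/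
open Matrix Finset Real

/-- `(w_j - w_k)^2` is at most the sum over all pairs. -/
lemma sq_le_pairs {c : ℕ} (w : Fin c → ℝ) (j k : Fin c) :
    (w j - w k) ^ 2 ≤ ∑ j : Fin c, ∑ j' ∈ Finset.Ioi j, (w j - w j') ^ 2 := by
  have key : ∀ j k : Fin c, j < k →
      (w j - w k) ^ 2 ≤ ∑ j : Fin c, ∑ j' ∈ Finset.Ioi j, (w j - w j') ^ 2 := by
    intro j k h
    calc (w j - w k) ^ 2 ≤ ∑ j' ∈ Finset.Ioi j, (w j - w j') ^ 2 :=
          Finset.single_le_sum (f := fun j' => (w j - w j') ^ 2)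
            (fun i _ => sq_nonneg _) (Finset.mem_Ioi.2 h)
      _ ≤ _ := Finset.single_le_sum (f := fun j => ∑ j' ∈ Finset.Ioi j, (w j - w j') ^ 2)
            (fun i _ => Finset.sum_nonneg fun _ _ => sq_nonneg _) (Finset.mem_univ j)
  rcases lt_trichotomy j k with h | h | h
  · exact key j k h
  · subst h
    simp only [sub_self]
    norm_num
    exact Finset.sum_nonneg fun i _ => Finset.sum_nonneg fun _ _ => sq_nonneg _
  · have := key k j h
    have e : (w j - w k) ^ 2 = (w k - w j) ^ 2 := by ring
    rw [e]; exact this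

/-- Symmetrized Hoeffding-type bound. -/
lemma mgf_bound {c : ℕ} (p w : Fin c → ℝ) (hp : ∀ j, 0 ≤ p j) (h1 : ∑ j, p j = 1) (S : ℝ)
    (hS : ∀ j k, (w j - w k) ^ 2 ≤ S) :
    ∑ j, p j * exp (w j) ≤ exp (∑ j, p j * w j + 1 / 2 * S) := by
  have jen : exp (∑ j, p j * (-w j)) ≤ ∑ j, p j * exp (-w j) := by
    have := convexOn_exp.map_sum_le (t := Finset.univ) (w := p) (p := fun j => -w j)
      (fun i _ => hp i) h1 (fun _ _ => Set.mem_univ _)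
    simpa [smul_eq_mul] using this
  have prod : (∑ j, p j * exp (w j)) * (∑ k, p k * exp (-w k))
      = ∑ j, ∑ k, p j * p k * exp (w j - w k) := by
    rw [Finset.sum_mul_sum]
    refine Finset.sum_congr rfl fun j _ => Finset.sum_congr rfl fun k _ => ?_
    rw [sub_eq_add_neg, exp_add]; ring
  have sym : ∑ j, ∑ k, p j * p k * exp (w j - w k)
      = ∑ j, ∑ k, p j * p k * cosh (w j - w k) := by
    have sw : ∑ j, ∑ k, p j * p k * exp (w j - w k)
        = ∑ j, ∑ k, p j * p k * exp (-(w j - w k)) := by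
      rw [Finset.sum_comm]
      refine Finset.sum_congr rfl fun j _ => Finset.sum_congr rfl fun k _ => ?_
      rw [neg_sub]; ring
    have : ∑ j, ∑ k, p j * p k * cosh (w j - w k)
        = ((∑ j, ∑ k, p j * p k * exp (w j - w k))
          + ∑ j, ∑ k, p j * p k * exp (-(w j - w k))) / 2 := by
      rw [← Finset.sum_add_distrib, Finset.sum_div]
      refine Finset.sum_congr rfl fun j _ => ?_
      rw [← Finset.sum_add_distrib, Finset.sum_div]
      refine Finset.sum_congr rfl fun k _ => ?_
      rw [cosh_eq]; ring
    rw [this, ← sw]; ring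
  have le : ∑ j, ∑ k, p j * p k * cosh (w j - w k) ≤ exp (1 / 2 * S) := by
    calc ∑ j, ∑ k, p j * p k * cosh (w j - w k)
        ≤ ∑ j, ∑ k, p j * p k * exp (1 / 2 * S) := by
          refine Finset.sum_le_sum fun j _ => Finset.sum_le_sum fun k _ => ?_
          refine mul_le_mul_of_nonneg_left ?_ (mul_nonneg (hp j) (hp k))
          refine (cosh_le_exp_half_sq _).trans (exp_le_exp.2 ?_)
          have := hS j k
          linarith
      _ = exp (1 / 2 * S) := by
          simp only [← Finset.sum_mul, ← Finset.mul_sum, h1]; ring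
  have A0 : 0 ≤ ∑ j, p j * exp (w j) :=
    Finset.sum_nonneg fun j _ => mul_nonneg (hp j) (exp_pos _).le
  have m : (∑ j, p j * exp (w j)) * exp (∑ j, p j * (-w j)) ≤ exp (1 / 2 * S) :=
    (mul_le_mul_of_nonneg_left jen A0).trans (by rw [prod, sym]; exact le)
  have e : ∑ j, p j * (-w j) = -∑ j, p j * w j := by simp
  rw [e] at m
  calc ∑ j, p j * exp (w j)
      = exp (∑ j, p j * w j) *
        ((∑ j, p j * exp (w j)) * exp (-∑ j, p j * w j)) := by
        rw [exp_neg]; field_simp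
    _ ≤ exp (∑ j, p j * w j) * exp (1 / 2 * S) := mul_le_mul_of_nonneg_left m (exp_pos _).le
    _ = _ := by rw [exp_add]

/-- One-sample bound. -/
lemma sample_bound {c : ℕ} (z w : Fin c → ℝ) (y : Fin c) :
    -log (exp (z y + w y) / ∑ j, exp (z j + w j)) ≤ -log (exp (z y) / ∑ j, exp (z j))
      + ((∑ j, exp (z j) / (∑ k, exp (z k)) * w j) - w y)
      + 1 / 2 * ∑ j : Fin c, ∑ j' ∈ Finset.Ioi j, (w j - w j') ^ 2 := by
  have ne : (Finset.univ : Finset (Fin c)).Nonempty := ⟨y, Finset.mem_univ _⟩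
  have Z : 0 < ∑ k, exp (z k) := Finset.sum_pos (fun _ _ => exp_pos _) ne
  have Z' : 0 < ∑ k, exp (z k + w k) := Finset.sum_pos (fun _ _ => exp_pos _) ne
  have b := mgf_bound (fun j => exp (z j) / (∑ k, exp (z k))) w
    (fun j => (div_pos (exp_pos _) Z).le) (by rw [← Finset.sum_div]; exact div_self Z.ne') _
    (sq_le_pairs w)
  have e : ∑ j, exp (z j) / (∑ k, exp (z k)) * exp (w j)
      = (∑ k, exp (z k + w k)) / ∑ k, exp (z k) := by
    rw [Finset.sum_div]
    refine Finset.sum_congr rfl fun j _ => ?_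
    rw [exp_add]; ring
  rw [e] at b
  have l := log_le_log (div_pos Z' Z) b
  rw [log_exp, log_div Z'.ne' Z.ne'] at l
  rw [log_div (exp_pos _).ne' Z'.ne', log_div (exp_pos _).ne' Z.ne', log_exp, log_exp]
  linarith

lemma quad_eq {d n : ℕ} (D : Matrix (Fin d) (Fin n) ℝ) (v : Fin d → ℝ) :
    v ⬝ᵥ ((∑ i : Fin n, Matrix.vecMulVec (fun u => D u i) (fun u => D u i)) *ᵥ v)
      = ∑ i, (∑ u, D u i * v u) ^ 2 := by
  rw [Matrix.sum_mulVec, dotProduct_sum]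
  refine Finset.sum_congr rfl fun i _ => ?_
  rw [Matrix.vecMulVec_mulVec]
  simp only [dotProduct, Pi.smul_apply, MulOpposite.smul_eq_mul_unop, MulOpposite.unop_op]
  rw [sq, Finset.sum_mul]
  refine Finset.sum_congr rfl fun u _ => ?_
  ring

/-- First-order term. -/
noncomputable def lin {d n c : ℕ} (D : Matrix (Fin d) (Fin n) ℝ) (y : Fin n → Fin c)
    (q : Fin n → Fin c → ℝ) (Ψ : Matrix (Fin d) (Fin c) ℝ) : ℝ :=
  ∑ i, ((∑ j, q i j * ∑ u, D u i * Ψ u j) - ∑ u, D u i * Ψ u (y i))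

/-- Second-order term. -/
noncomputable def quad {d n c : ℕ} (D : Matrix (Fin d) (Fin n) ℝ)
    (Ψ : Matrix (Fin d) (Fin c) ℝ) : ℝ :=
  ∑ i : Fin n, ∑ j : Fin c, ∑ j' ∈ Finset.Ioi j,
    ((∑ u, D u i * Ψ u j) - ∑ u, D u i * Ψ u j') ^ 2

lemma lin_smul {d n c : ℕ} (D : Matrix (Fin d) (Fin n) ℝ) (y : Fin n → Fin c)
    (q : Fin n → Fin c → ℝ) (Ψ : Matrix (Fin d) (Fin c) ℝ) (t : ℝ) :
    lin D y q (t • Ψ) = t * lin D y q Ψ := by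
  simp only [lin, Matrix.smul_apply, smul_eq_mul, mul_left_comm _ t, ← Finset.mul_sum, ← mul_sub]

lemma quad_smul {d n c : ℕ} (D : Matrix (Fin d) (Fin n) ℝ)
    (Ψ : Matrix (Fin d) (Fin c) ℝ) (t : ℝ) :
    quad D (t • Ψ) = t ^ 2 * quad D Ψ := by
  simp only [quad, Matrix.smul_apply, smul_eq_mul, mul_left_comm _ t, ← Finset.mul_sum, ← mul_sub,
    mul_pow]

lemma loss_bound {d n c : ℕ} (D : Matrix (Fin d) (Fin n) ℝ) (y : Fin n → Fin c)
    (F : Matrix (Fin d) (Fin c) ℝ) (b : Fin c → ℝ) :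
    ∃ q : Fin n → Fin c → ℝ, ∀ Ψ : Matrix (Fin d) (Fin c) ℝ,
      celoss D y (F + Ψ) b ≤ celoss D y F b + lin D y q Ψ + 1 / 2 * quad D Ψ := by
  refine ⟨fun i j => exp ((∑ u, D u i * F u j) + b j) /
    ∑ k, exp ((∑ u, D u i * F u k) + b k), fun Ψ => ?_⟩
  unfold celoss lin quad
  rw [← Finset.sum_neg_distrib, ← Finset.sum_neg_distrib, Finset.mul_sum,
    ← Finset.sum_add_distrib, ← Finset.sum_add_distrib]
  refine Finset.sum_le_sum fun i _ => ?_
  have h := sample_bound (fun j => (∑ u, D u i * F u j) + b j) (fun j => ∑ u, D u i * Ψ u j) (y i)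
  have e : ∀ j, (∑ u, D u i * (F + Ψ) u j) + b j
      = (∑ u, D u i * F u j) + b j + ∑ u, D u i * Ψ u j := by
    intro j
    simp only [Matrix.add_apply, mul_add, Finset.sum_add_distrib]
    ring
  simp only [e]
  exact h

theorem multiverse_stmt7 {d n c : ℕ} (D : Matrix (Fin d) (Fin n) ℝ) (y : Fin n → Fin c)
    (Fstar : Matrix (Fin d) (Fin c) ℝ) (bstar : Fin c → ℝ)
    (hmin : ∀ (F : Matrix (Fin d) (Fin c) ℝ) (b : Fin c → ℝ),
      celoss D y Fstar bstar ≤ celoss D y F b)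
    (Ψ : Matrix (Fin d) (Fin c) ℝ) :
    celoss D y (Fstar + Ψ) bstar ≤ celoss D y Fstar bstar +
      (1 / 2 : ℝ) * ∑ j : Fin c, ∑ j' ∈ Finset.Ioi j,
        (fun u => Ψ u j - Ψ u j') ⬝ᵥ
          ((∑ i : Fin n, Matrix.vecMulVec (fun u => D u i) (fun u => D u i)) *ᵥ
            fun u => Ψ u j - Ψ u j') := by

  obtain ⟨q, hq⟩ := loss_bound D y Fstar bstar
  have hlin : lin D y q Ψ ≤ 0 := by
    by_contra! hpos
    have hQ : 0 ≤ quad D Ψ := Finset.sum_nonneg fun _ _ => Finset.sum_nonneg fun _ _ =>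
      Finset.sum_nonneg fun _ _ => sq_nonneg _
    set A := lin D y q Ψ
    set Q := quad D Ψ
    have h := hq ((-(A / (Q + 1))) • Ψ)
    rw [lin_smul, quad_smul] at h
    have h2 := hmin (Fstar + (-(A / (Q + 1))) • Ψ) bstar
    have hQ1 : 0 < Q + 1 := by linarith
    have t0 : 0 < A / (Q + 1) := div_pos hpos hQ1
    have hA : A = A / (Q + 1) * (Q + 1) := by field_simp
    change _ ≤ _ + _ * A + 1 / 2 * (_ * Q) at h
    generalize A / (Q + 1) = t at *
    have h3 : 0 ≤ -t * A + 1 / 2 * ((-t) ^ 2 * Q) := by linarith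
    rw [hA] at h3
    nlinarith [mul_pos t0 t0, mul_nonneg (mul_pos t0 t0).le hQ]
  have hfin := hq Ψ
  have e : (∑ j : Fin c, ∑ j' ∈ Finset.Ioi j,
        (fun u => Ψ u j - Ψ u j') ⬝ᵥ
          ((∑ i : Fin n, Matrix.vecMulVec (fun u => D u i) (fun u => D u i)) *ᵥ
            fun u => Ψ u j - Ψ u j')) = quad D Ψ := by
    simp only [quad_eq, quad, mul_sub, Finset.sum_sub_distrib]
    rw [Finset.sum_comm]
    refine Finset.sum_congr rfl fun j _ => ?_
    rw [Finset.sum_comm]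
  rw [e]
  linarith
end

section
/- Let (F*, b*) with F* = [f*_1,…,f*_c] be a global minimizer of the cross-entropy loss achieving L*(D,y), let λ_d be the smallest eigenvalue of K = Σ_i d_i d_iᵀ, and let v be a corresponding unit eigenvector (K v = λ_d v, ‖v‖ = 1). Assume vᵀ f*_j ≠ 0 for every j, set α_j = −‖f*_j‖²/(vᵀ f*_j), F² = F* + v·αᵀ, and A = (1/2) Σ_{j=1}^{c} Σ_{j'=j+1}^{c} (α_j − α_{j'})². Then the columns of F* and F² satisfy f*_jᵀ f²_j = 0 for all j, and the joint loss J = L(F*, b*, D, y) + L(F², b*, D, y) satisfies 2L*(D,y) ≤ J ≤ 2L*(D,y) + A·λ_d. -/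
open Matrix Finset Real

lemma celoss_eq_aux {d n c : ℕ} (D : Matrix (Fin d) (Fin n) ℝ) (y : Fin n → Fin c)
    (F : Matrix (Fin d) (Fin c) ℝ) (b : Fin c → ℝ) :
    celoss D y F b = ∑ i : Fin n,
      (Real.log (∑ j : Fin c, Real.exp ((∑ u : Fin d, D u i * F u j) + b j)) -
        ((∑ u : Fin d, D u i * F u (y i)) + b (y i))) := by
  unfold celoss
  rw [← Finset.sum_neg_distrib]
  refine Finset.sum_congr rfl fun i _ => ?_
  have hpos : 0 < ∑ j : Fin c, Real.exp ((∑ u : Fin d, D u i * F u j) + b j) :=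
    Finset.sum_pos (fun j _ => Real.exp_pos _) ⟨y i, Finset.mem_univ _⟩
  rw [Real.log_div (Real.exp_pos _).ne' hpos.ne', Real.log_exp]
  ring

lemma pair_sq_le_aux {c : ℕ} (α : Fin c → ℝ) (j k : Fin c) :
    (α j - α k) ^ 2 ≤ ∑ j : Fin c, ∑ j' ∈ Finset.Ioi j, (α j - α j') ^ 2 := by
  have key : ∀ j k : Fin c, j < k →
      (α j - α k) ^ 2 ≤ ∑ j : Fin c, ∑ j' ∈ Finset.Ioi j, (α j - α j') ^ 2 := by
    intro j k h
    have h1 : (α j - α k) ^ 2 ≤ ∑ j' ∈ Finset.Ioi j, (α j - α j') ^ 2 :=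
      Finset.single_le_sum (f := fun j' => (α j - α j') ^ 2) (fun _ _ => sq_nonneg _)
        (Finset.mem_Ioi.2 h)
    have h2 := Finset.single_le_sum (f := fun j => ∑ j' ∈ Finset.Ioi j, (α j - α j') ^ 2)
      (s := Finset.univ) (fun _ _ => Finset.sum_nonneg fun _ _ => sq_nonneg _)
        (Finset.mem_univ j)
    exact h1.trans h2
  rcases lt_trichotomy j k with h | h | h
  · exact key j k h
  · subst h
    simp only [sub_self]
    rw [zero_pow two_ne_zero]
    exact Finset.sum_nonneg fun _ _ => Finset.sum_nonneg fun _ _ => sq_nonneg _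
  · have := key k j h
    rw [show (α j - α k) ^ 2 = (α k - α j) ^ 2 by ring]
    exact this

lemma logsum_aux {c : ℕ} (hc : Nonempty (Fin c)) (z α : Fin c → ℝ) (s S : ℝ)
    (hS : ∀ j k, (α j - α k) ^ 2 ≤ S) :
    Real.log (∑ j, Real.exp (z j + s * α j)) + Real.log (∑ j, Real.exp (z j - s * α j)) ≤
      2 * Real.log (∑ j, Real.exp (z j)) + s ^ 2 * (S / 2) := by
  have hp : ∀ w : Fin c → ℝ, 0 < ∑ j, Real.exp (w j) := fun w =>
    Finset.sum_pos (fun j _ => Real.exp_pos _) Finset.univ_nonempty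
  have h1 := hp fun j => z j + s * α j
  have h2 := hp fun j => z j - s * α j
  have h0 := hp z
  rw [← Real.log_mul h1.ne' h2.ne']
  have e : 2 * Real.log (∑ j, Real.exp (z j)) + s ^ 2 * (S / 2) =
      Real.log ((∑ j, Real.exp (z j)) * (∑ j, Real.exp (z j)) * Real.exp (s ^ 2 * (S / 2))) := by
    rw [Real.log_mul (mul_pos h0 h0).ne' (Real.exp_pos _).ne', Real.log_mul h0.ne' h0.ne',
      Real.log_exp]
    ring
  rw [e]
  apply Real.log_le_log (mul_pos h1 h2)
  have a1 : (∑ j, Real.exp (z j + s * α j)) * (∑ j, Real.exp (z j - s * α j)) =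
      ∑ j, ∑ k, Real.exp (z j) * Real.exp (z k) * Real.exp (s * (α j - α k)) := by
    rw [Finset.sum_mul_sum]
    refine Finset.sum_congr rfl fun j _ => Finset.sum_congr rfl fun k _ => ?_
    rw [← Real.exp_add, ← Real.exp_add, ← Real.exp_add]
    congr 1
    ring
  have a2 : (∑ j, Real.exp (z j + s * α j)) * (∑ j, Real.exp (z j - s * α j)) =
      ∑ j, ∑ k, Real.exp (z j) * Real.exp (z k) * Real.exp (-(s * (α j - α k))) := by
    rw [a1, Finset.sum_comm]
    refine Finset.sum_congr rfl fun j _ => Finset.sum_congr rfl fun k _ => ?_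
    rw [mul_comm (Real.exp (z k))]
    congr 2
    ring
  have a3 : (∑ j, Real.exp (z j + s * α j)) * (∑ j, Real.exp (z j - s * α j)) =
      ∑ j, ∑ k, Real.exp (z j) * Real.exp (z k) * Real.cosh (s * (α j - α k)) := by
    have : ∑ j, ∑ k, Real.exp (z j) * Real.exp (z k) * Real.cosh (s * (α j - α k)) =
        ((∑ j, ∑ k, Real.exp (z j) * Real.exp (z k) * Real.exp (s * (α j - α k))) +
        ∑ j, ∑ k, Real.exp (z j) * Real.exp (z k) * Real.exp (-(s * (α j - α k)))) / 2 := by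
      rw [← Finset.sum_add_distrib, Finset.sum_div]
      refine Finset.sum_congr rfl fun j _ => ?_
      rw [← Finset.sum_add_distrib, Finset.sum_div]
      refine Finset.sum_congr rfl fun k _ => ?_
      rw [Real.cosh_eq]
      ring
    rw [this, ← a1, ← a2]
    ring
  rw [a3, Finset.sum_mul_sum, Finset.sum_mul]
  refine Finset.sum_le_sum fun j _ => ?_
  rw [Finset.sum_mul]
  refine Finset.sum_le_sum fun k _ => ?_
  refine mul_le_mul_of_nonneg_left ((Real.cosh_le_exp_half_sq _).trans ?_)
    (mul_pos (Real.exp_pos _) (Real.exp_pos _)).le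
  apply Real.exp_le_exp.2
  have := mul_le_mul_of_nonneg_left (hS j k) (sq_nonneg s)
  nlinarith

/-- Construction of a second, columnwise-orthogonal classifier `F² = F* + v·αᵀ` along a
unit eigenvector `v` of `K = ∑ d_i d_iᵀ` for its smallest eigenvalue `λ_d`, with
`α_j = −‖f*_j‖²/(vᵀ f*_j)`.  The columns satisfy `f*_jᵀ f²_j = 0`, and the joint loss
`J = L(F*) + L(F²)` satisfies `2L* ≤ J ≤ 2L* + A·λ_d` where
`A = ½ ∑_{j<j'} (α_j − α_{j'})²`. -/
theorem multiverse_stmt8 {d n c : ℕ} (D : Matrix (Fin d) (Fin n) ℝ) (y : Fin n → Fin c)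
    (Fstar : Matrix (Fin d) (Fin c) ℝ) (bstar : Fin c → ℝ)
    (hmin : ∀ (F : Matrix (Fin d) (Fin c) ℝ) (b : Fin c → ℝ),
      celoss D y Fstar bstar ≤ celoss D y F b)
    (lam : ℝ) (v : Fin d → ℝ) (hv : v ≠ 0) (hvunit : ∑ u : Fin d, v u * v u = 1)
    (heig : (∑ i : Fin n, Matrix.vecMulVec (fun u => D u i) (fun u => D u i)) *ᵥ v = lam • v)
    (hsmall : ∀ (μ : ℝ) (w : Fin d → ℝ), w ≠ 0 →
      (∑ i : Fin n, Matrix.vecMulVec (fun u => D u i) (fun u => D u i)) *ᵥ w = μ • w →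
      lam ≤ μ)
    (hproj : ∀ j : Fin c, (∑ u : Fin d, v u * Fstar u j) ≠ 0)
    (α : Fin c → ℝ)
    (hα : ∀ j : Fin c, α j = -(∑ u : Fin d, Fstar u j * Fstar u j) /
      (∑ u : Fin d, v u * Fstar u j))
    (F2 : Matrix (Fin d) (Fin c) ℝ)
    (hF2 : ∀ (u : Fin d) (j : Fin c), F2 u j = Fstar u j + v u * α j) :
    (∀ j : Fin c, (∑ u : Fin d, Fstar u j * F2 u j) = 0) ∧
    2 * celoss D y Fstar bstar ≤ celoss D y Fstar bstar + celoss D y F2 bstar ∧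
    celoss D y Fstar bstar + celoss D y F2 bstar ≤ 2 * celoss D y Fstar bstar +
      ((1 / 2 : ℝ) * ∑ j : Fin c, ∑ j' ∈ Finset.Ioi j, (α j - α j') ^ 2) * lam := by
  refine ⟨fun j => ?_, by linarith [hmin F2 bstar], ?_⟩
  · have h1 : ∑ u : Fin d, Fstar u j * F2 u j =
        (∑ u : Fin d, Fstar u j * Fstar u j) + α j * ∑ u : Fin d, v u * Fstar u j := by
      rw [Finset.mul_sum, ← Finset.sum_add_distrib]
      refine Finset.sum_congr rfl fun u _ => ?_
      rw [hF2]
      ring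
    rw [h1, hα, div_mul_cancel₀ _ (hproj j)]
    ring
  · set S : ℝ := ∑ j : Fin c, ∑ j' ∈ Finset.Ioi j, (α j - α j') ^ 2 with hSdef
    let s : Fin n → ℝ := fun i => ∑ u, D u i * v u
    have hlam : ∑ i, s i ^ 2 = lam := by
      have h := congrArg (fun w => v ⬝ᵥ w) heig
      simp only [dotProduct_smul, Matrix.sum_mulVec, dotProduct_sum, smul_eq_mul] at h
      have hvv : v ⬝ᵥ v = 1 := hvunit
      rw [hvv, mul_one] at h
      rw [← h]
      refine Finset.sum_congr rfl fun i _ => ?_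
      rw [Matrix.vecMulVec_mulVec]
      simp only [dotProduct, Pi.smul_apply, MulOpposite.smul_eq_mul_unop, MulOpposite.unop_op]
      simp only [s, sq]
      rw [Finset.sum_mul]
      refine Finset.sum_congr rfl fun u _ => ?_
      ring
    let F3 : Matrix (Fin d) (Fin c) ℝ := fun u j => Fstar u j - v u * α j
    have e2 : ∀ i j, ∑ u, D u i * F2 u j = (∑ u, D u i * Fstar u j) + s i * α j := by
      intro i j
      simp only [s]
      rw [Finset.sum_mul, ← Finset.sum_add_distrib]
      refine Finset.sum_congr rfl fun u _ => ?_
      rw [hF2]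
      ring
    have e3 : ∀ i j, ∑ u, D u i * F3 u j = (∑ u, D u i * Fstar u j) - s i * α j := by
      intro i j
      simp only [s, F3]
      rw [Finset.sum_mul, ← Finset.sum_sub_distrib]
      refine Finset.sum_congr rfl fun u _ => ?_
      ring
    have key : celoss D y F2 bstar + celoss D y F3 bstar ≤
        2 * celoss D y Fstar bstar + (S / 2) * lam := by
      rw [celoss_eq_aux, celoss_eq_aux, celoss_eq_aux, ← hlam, Finset.mul_sum, Finset.mul_sum,
        ← Finset.sum_add_distrib, ← Finset.sum_add_distrib]
      refine Finset.sum_le_sum fun i _ => ?_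
      have h := logsum_aux ⟨y i⟩ (fun j => (∑ u, D u i * Fstar u j) + bstar j) α (s i) S
        (pair_sq_le_aux α)
      simp only [e2, e3]
      have r1 : ∀ j, (∑ u, D u i * Fstar u j) + s i * α j + bstar j =
        (∑ u, D u i * Fstar u j) + bstar j + s i * α j := fun j => by ring
      have r2 : ∀ j, (∑ u, D u i * Fstar u j) - s i * α j + bstar j =
        (∑ u, D u i * Fstar u j) + bstar j - s i * α j := fun j => by ring
      simp only [r1, r2]
      linarith
    have h3 := hmin F3 bstar
    linarith
end

section
/- Let (F¹, b¹) with F¹ = [f¹_1,…,f¹_c] be a global minimizer of the cross-entropy loss achieving L*(D,y). Let λ_1 ≥ ⋯ ≥ λ_d be the eigenvalues of K = Σ_i d_i d_iᵀ with orthonormal eigenvectors, and let v_{d−l+1} (l = 1,…,m−1) be orthonormal eigenvectors for the m−1 smallest eigenvalues λ_{d−l+1}. Suppose α_{jlr} (j ∈ {1,…,c}, l ∈ {1,…,m−1}, r ∈ {1,…,m}) is a tensor of coefficients with α_{jl1} = 0 for all j, l, such that the matrices F^r with columns f^r_j = f¹_j + Σ_{l=1}^{m−1} α_{jlr} v_{d−l+1}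 satisfy f^r_jᵀ f^s_j = 0 for all j and all r ≠ s. Set A_l = (1/2) Σ_{j=1}^{c} Σ_{j'=j+1}^{c} Σ_{r=1}^{m} (α_{jlr} − α_{j'lr})². Then the joint loss J = Σ_{r=1}^{m} L(F^r, b¹, D, y) satisfies m·L*(D,y) ≤ J ≤ m·L*(D,y) + Σ_{l=1}^{m−1} A_l·λ_{d−l+1}. -/
open Matrix Finset Real

/-- The index `d - l + 1` (1-based) of the `l`-th smallest eigenvalue, as an index into
`Fin d` for eigenvalues sorted in decreasing order: `l = 1,…,m-1 ↦ d-1, d-2, …` (0-based). -/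
def smallIdx {d m : ℕ} (hd : 0 < d) (l : Fin (m - 1)) : Fin d :=
  ⟨d - 1 - (l : ℕ), by omega⟩

lemma mv_hoeff {c : ℕ} (p δ : Fin c → ℝ) (hp : ∀ j, 0 ≤ p j) (h1 : ∑ j, p j = 1) (S : ℝ)
    (hS : ∀ j k, (δ j - δ k) ^ 2 ≤ S) :
    ∑ j, p j * Real.exp (δ j) ≤ Real.exp (∑ j, p j * δ j + S / 2) := by
  have hJ : Real.exp (-∑ j, p j * δ j) ≤ ∑ j, p j * Real.exp (-δ j) := by
    have := convexOn_exp.map_sum_le (t := Finset.univ) (w := p) (p := fun j => -δ j)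
      (fun j _ => hp j) h1 (fun j _ => Set.mem_univ _)
    simpa [smul_eq_mul] using this
  have hprod : (∑ j, p j * Real.exp (δ j)) * (∑ k, p k * Real.exp (-δ k)) ≤ Real.exp (S / 2) := by
    have e1 : (∑ j, p j * Real.exp (δ j)) * (∑ k, p k * Real.exp (-δ k))
        = ∑ j, ∑ k, p j * p k * Real.exp (δ j - δ k) := by
      rw [Finset.sum_mul_sum]
      refine Finset.sum_congr rfl fun j _ => Finset.sum_congr rfl fun k _ => ?_
      rw [sub_eq_add_neg, Real.exp_add]; ring
    have e2 : ∑ j, ∑ k, p j * p k * Real.exp (δ j - δ k)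
        = ∑ j, ∑ k, p j * p k * Real.exp (-(δ j - δ k)) := by
      rw [Finset.sum_comm]
      refine Finset.sum_congr rfl fun j _ => Finset.sum_congr rfl fun k _ => ?_
      rw [neg_sub]; ring
    have e3 : ∑ j, ∑ k, p j * p k * Real.exp (δ j - δ k)
        = ∑ j, ∑ k, p j * p k * Real.cosh (δ j - δ k) := by
      have : ∑ j, ∑ k, p j * p k * Real.cosh (δ j - δ k)
        = (∑ j, ∑ k, p j * p k * Real.exp (δ j - δ k)
          + ∑ j, ∑ k, p j * p k * Real.exp (-(δ j - δ k))) / 2 := by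
        simp only [← Finset.sum_add_distrib, Finset.sum_div]
        refine Finset.sum_congr rfl fun j _ => Finset.sum_congr rfl fun k _ => ?_
        rw [Real.cosh_eq]; ring
      rw [this, ← e2]; ring
    rw [e1, e3]
    calc ∑ j, ∑ k, p j * p k * Real.cosh (δ j - δ k)
        ≤ ∑ j, ∑ k, p j * p k * Real.exp (S / 2) := by
          refine Finset.sum_le_sum fun j _ => Finset.sum_le_sum fun k _ => ?_
          refine mul_le_mul_of_nonneg_left ?_ (mul_nonneg (hp j) (hp k))
          refine (Real.cosh_le_exp_half_sq _).trans (Real.exp_le_exp.2 ?_)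
          have := hS j k
          linarith
      _ = Real.exp (S / 2) := by
          simp only [← Finset.sum_mul, ← Finset.mul_sum, h1]; ring
  have hA : 0 ≤ ∑ j, p j * Real.exp (δ j) :=
    Finset.sum_nonneg fun j _ => mul_nonneg (hp j) (Real.exp_pos _).le
  have h2 := (mul_le_mul_of_nonneg_left hJ hA).trans hprod
  rw [Real.exp_neg, ← div_eq_mul_inv, div_le_iff₀ (Real.exp_pos _)] at h2
  rw [Real.exp_add]; linarith

lemma mv_pair {c : ℕ} (δ : Fin c → ℝ) (j k : Fin c) :
    (δ j - δ k) ^ 2 ≤ ∑ j, ∑ j' ∈ Finset.Ioi j, (δ j - δ j') ^ 2 := by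
  have key : ∀ j k : Fin c, j < k →
      (δ j - δ k) ^ 2 ≤ ∑ j, ∑ j' ∈ Finset.Ioi j, (δ j - δ j') ^ 2 := by
    intro j k h
    refine le_trans ?_ (Finset.single_le_sum (f := fun j => ∑ j' ∈ Finset.Ioi j, (δ j - δ j') ^ 2)
      (fun i _ => Finset.sum_nonneg fun _ _ => sq_nonneg _) (Finset.mem_univ j))
    exact Finset.single_le_sum (f := fun j' => (δ j - δ j') ^ 2)
      (fun i _ => sq_nonneg _) (Finset.mem_Ioi.2 h)
  rcases lt_trichotomy j k with h | h | h
  · exact key j k h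
  · subst h
    simp only [sub_self, ne_eq, OfNat.ofNat_ne_zero, not_false_eq_true, zero_pow]
    exact Finset.sum_nonneg fun _ _ => Finset.sum_nonneg fun _ _ => sq_nonneg _
  · have := key k j h
    nlinarith

lemma mv_lse {c : ℕ} (z δ : Fin c → ℝ) (a : Fin c) :
    -Real.log (Real.exp (z a + δ a) / ∑ j, Real.exp (z j + δ j)) ≤
      -Real.log (Real.exp (z a) / ∑ j, Real.exp (z j))
      + (∑ j, (Real.exp (z j) / ∑ k, Real.exp (z k)) * δ j - δ a)
      + (1 / 2) * ∑ j, ∑ j' ∈ Finset.Ioi j, (δ j - δ j') ^ 2 := by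
  have pos : ∀ x : Fin c → ℝ, 0 < ∑ j, Real.exp (x j) := fun x =>
    Finset.sum_pos (fun j _ => Real.exp_pos _) ⟨a, Finset.mem_univ a⟩
  have hz := pos z
  have hzd := pos (fun j => z j + δ j)
  have h := mv_hoeff (fun j => Real.exp (z j) / ∑ k, Real.exp (z k)) δ
    (fun j => div_nonneg (Real.exp_pos _).le hz.le)
    (by rw [← Finset.sum_div, div_self hz.ne']) _ (mv_pair δ)
  have e : ∑ j, (Real.exp (z j) / ∑ k, Real.exp (z k)) * Real.exp (δ j)
      = (∑ j, Real.exp (z j + δ j)) / ∑ k, Real.exp (z k) := by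
    rw [Finset.sum_div]
    refine Finset.sum_congr rfl fun j _ => ?_
    rw [Real.exp_add]; ring
  rw [e] at h
  have h2 := Real.log_le_log (div_pos hzd hz) h
  rw [Real.log_exp, Real.log_div hzd.ne' hz.ne'] at h2
  rw [Real.log_div (Real.exp_pos _).ne' hzd.ne', Real.log_div (Real.exp_pos _).ne' hz.ne',
    Real.log_exp, Real.log_exp]
  linarith

lemma mv_loss {d n c : ℕ} (D : Matrix (Fin d) (Fin n) ℝ) (y : Fin n → Fin c)
    (F1 : Matrix (Fin d) (Fin c) ℝ) (b1 : Fin c → ℝ)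
    (hmin : ∀ (F : Matrix (Fin d) (Fin c) ℝ) (b : Fin c → ℝ),
      celoss D y F1 b1 ≤ celoss D y F b) (Δ : Matrix (Fin d) (Fin c) ℝ) :
    celoss D y (F1 + Δ) b1 ≤ celoss D y F1 b1 +
      (1 / 2) * ∑ i, ∑ j, ∑ j' ∈ Finset.Ioi j,
        (∑ u, D u i * Δ u j - ∑ u, D u i * Δ u j') ^ 2 := by
  set δ : Fin n → Fin c → ℝ := fun i j => ∑ u, D u i * Δ u j with hδ
  set z : Fin n → Fin c → ℝ := fun i j => (∑ u, D u i * F1 u j) + b1 j with hz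
  set G : ℝ := ∑ i, (∑ j, (Real.exp (z i j) / ∑ k, Real.exp (z i k)) * δ i j - δ i (y i)) with hG
  set S : ℝ := ∑ i, ∑ j, ∑ j' ∈ Finset.Ioi j, (δ i j - δ i j') ^ 2 with hS
  have main : ∀ t : ℝ, celoss D y (F1 + t • Δ) b1 ≤ celoss D y F1 b1 + t * G
      + t ^ 2 * ((1 / 2) * S) := by
    intro t
    have h0 : celoss D y F1 b1 =
        ∑ i, -Real.log (Real.exp (z i (y i)) / ∑ j, Real.exp (z i j)) := by
      rw [celoss, Finset.sum_neg_distrib]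
    have h1 : celoss D y (F1 + t • Δ) b1 =
        ∑ i, -Real.log (Real.exp (z i (y i) + t * δ i (y i)) /
          ∑ j, Real.exp (z i j + t * δ i j)) := by
      have e : ∀ i j, (∑ u, D u i * (F1 + t • Δ) u j) + b1 j = z i j + t * δ i j := by
        intro i j
        simp only [hz, hδ, Matrix.add_apply, Matrix.smul_apply, smul_eq_mul, mul_add,
          Finset.sum_add_distrib, Finset.mul_sum]
        have : ∑ u, D u i * (t * Δ u j) = ∑ u, t * (D u i * Δ u j) :=
          Finset.sum_congr rfl fun u _ => by ring
        rw [this]; ring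
      simp only [celoss, e, Finset.sum_neg_distrib]
    rw [h0, h1, hG, hS, Finset.mul_sum, Finset.mul_sum, Finset.mul_sum,
      ← Finset.sum_add_distrib, ← Finset.sum_add_distrib]
    refine Finset.sum_le_sum fun i _ => ?_
    refine (mv_lse (z i) (fun j => t * δ i j) (y i)).trans (le_of_eq ?_)
    have e1 : ∑ j, (Real.exp (z i j) / ∑ k, Real.exp (z i k)) * (t * δ i j)
        = t * ∑ j, (Real.exp (z i j) / ∑ k, Real.exp (z i k)) * δ i j := by
      rw [Finset.mul_sum]
      exact Finset.sum_congr rfl fun u _ => by ring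
    have e2 : ∑ j, ∑ j' ∈ Finset.Ioi j, (t * δ i j - t * δ i j') ^ 2
        = t ^ 2 * ∑ j, ∑ j' ∈ Finset.Ioi j, (δ i j - δ i j') ^ 2 := by
      simp only [Finset.mul_sum]
      exact Finset.sum_congr rfl fun u _ => Finset.sum_congr rfl fun v _ => by ring
    rw [e1, e2]; ring
  have hS0 : 0 ≤ S := Finset.sum_nonneg fun _ _ => Finset.sum_nonneg fun _ _ =>
    Finset.sum_nonneg fun _ _ => sq_nonneg _
  have hG0 : G ≤ 0 := by
    by_contra hcon
    push Not at hcon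
    have h := (hmin (F1 + (-(G / (S + 1))) • Δ) b1).trans (main _)
    have hq : 0 < G / (S + 1) := by positivity
    have hq2 : G / (S + 1) * (S + 1) = G := by field_simp
    set q := G / (S + 1)
    have : q * G ≤ q * (q * ((1 / 2) * S)) := by nlinarith
    have := le_of_mul_le_mul_left this hq
    nlinarith
  have := main 1
  rw [one_smul] at this
  linarith

/-- Multiverse bound for `m` orthogonal classifier sets built from a global minimizer
`(F¹, b¹)` by perturbing along orthonormal eigenvectors of `K = ∑ d_i d_iᵀ` belonging to
its `m-1` smallest eigenvalues:
`m·L*(D,y) ≤ ∑_r L(F^r, b¹, D, y) ≤ m·L*(D,y) + ∑_l A_l·λ_{d-l+1}`. -/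
theorem multiverse_stmt9 {d n c m : ℕ} (hd : 0 < d) (hm : 0 < m) (hmd : m - 1 ≤ d)
    (D : Matrix (Fin d) (Fin n) ℝ) (y : Fin n → Fin c)
    (F1 : Matrix (Fin d) (Fin c) ℝ) (b1 : Fin c → ℝ)
    (hmin : ∀ (F : Matrix (Fin d) (Fin c) ℝ) (b : Fin c → ℝ),
      celoss D y F1 b1 ≤ celoss D y F b)
    -- an orthonormal eigenbasis of `K` with eigenvalues sorted in decreasing order
    (w : Fin d → Fin d → ℝ) (μ : Fin d → ℝ)
    (horthw : ∀ k k' : Fin d, (∑ u : Fin d, w k u * w k' u) = if k = k' then 1 else 0)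
    (heig : ∀ k : Fin d,
      (∑ i : Fin n, Matrix.vecMulVec (fun u => D u i) (fun u => D u i)) *ᵥ w k = μ k • w k)
    (hsorted : ∀ k k' : Fin d, k ≤ k' → μ k' ≤ μ k)
    -- the coefficient tensor `α_{jlr}`, with `α_{jl1} = 0` so that `F^1 = F¹`
    (α : Fin c → Fin (m - 1) → Fin m → ℝ)
    (hα1 : ∀ (j : Fin c) (l : Fin (m - 1)), α j l ⟨0, hm⟩ = 0)
    -- the classifier sets `f^r_j = f¹_j + ∑_l α_{jlr} v_{d-l+1}`
    (F : Fin m → Matrix (Fin d) (Fin c) ℝ)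
    (hF : ∀ (r : Fin m) (u : Fin d) (j : Fin c),
      F r u j = F1 u j + ∑ l : Fin (m - 1), α j l r * w (smallIdx hd l) u)
    -- columnwise orthogonality between the different sets
    (horthF : ∀ (j : Fin c) (r s : Fin m), r ≠ s →
      (∑ u : Fin d, F r u j * F s u j) = 0) :
    (m : ℝ) * celoss D y F1 b1 ≤ ∑ r : Fin m, celoss D y (F r) b1 ∧
    ∑ r : Fin m, celoss D y (F r) b1 ≤ (m : ℝ) * celoss D y F1 b1 +
      ∑ l : Fin (m - 1),
        ((1 / 2 : ℝ) * ∑ j : Fin c, ∑ j' ∈ Finset.Ioi j, ∑ r : Fin m,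
          (α j l r - α j' l r) ^ 2) * μ (smallIdx hd l) := by
  have hle : ∀ r, celoss D y F1 b1 ≤ celoss D y (F r) b1 := fun r => hmin _ _
  refine ⟨?_, ?_⟩
  · have := Finset.sum_le_sum (s := Finset.univ) fun r _ => hle r
    simpa using this
  -- projections of the data on the eigenvectors
  have hinj : ∀ l l' : Fin (m - 1), smallIdx hd l = smallIdx hd l' ↔ l = l' := by
    intro l l'
    simp only [smallIdx, Fin.ext_iff]
    omega
  set q : Fin n → Fin (m - 1) → ℝ := fun i l => ∑ u, D u i * w (smallIdx hd l) u with hq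
  have hqq : ∀ l l', ∑ i, q i l * q i l' = if l = l' then μ (smallIdx hd l) else 0 := by
    intro l l'
    have h1 : ∑ i, q i l * q i l' = w (smallIdx hd l') ⬝ᵥ
        ((∑ i : Fin n, Matrix.vecMulVec (fun u => D u i) (fun u => D u i)) *ᵥ
          w (smallIdx hd l)) := by
      rw [Matrix.sum_mulVec, dotProduct_sum]
      refine Finset.sum_congr rfl fun i _ => ?_
      simp only [hq, Matrix.vecMulVec_mulVec, dotProduct, Pi.smul_apply,
        MulOpposite.smul_eq_mul_unop, MulOpposite.unop_op]
      rw [mul_comm, Finset.sum_mul]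
      exact Finset.sum_congr rfl fun u _ => by ring
    rw [h1, heig, dotProduct_smul, dotProduct, horthw, smul_eq_mul]
    simp only [hinj]
    by_cases h : l = l'
    · simp [h]
    · simp [h, Ne.symm h]
  have hr : ∀ r, celoss D y (F r) b1 ≤ celoss D y F1 b1 +
      (1 / 2) * ∑ j, ∑ j' ∈ Finset.Ioi j, ∑ l, (α j l r - α j' l r) ^ 2 * μ (smallIdx hd l) := by
    intro r
    set Δ : Matrix (Fin d) (Fin c) ℝ := fun u j => ∑ l, α j l r * w (smallIdx hd l) u with hΔ
    have hFr : F r = F1 + Δ := by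
      ext u j
      rw [hF]; rfl
    rw [hFr]
    refine (mv_loss D y F1 b1 hmin Δ).trans (le_of_eq ?_)
    congr 2
    rw [Finset.sum_comm]
    refine Finset.sum_congr rfl fun j _ => ?_
    rw [Finset.sum_comm]
    refine Finset.sum_congr rfl fun j' _ => ?_
    have e : ∀ i j, ∑ u, D u i * Δ u j = ∑ l, α j l r * q i l := by
      intro i j
      simp only [hΔ, hq, Finset.mul_sum]
      rw [Finset.sum_comm]
      exact Finset.sum_congr rfl fun _ _ => Finset.sum_congr rfl fun _ _ => by ring
    have e2 : ∀ i, (∑ u, D u i * Δ u j - ∑ u, D u i * Δ u j') ^ 2 =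
        ∑ l, ∑ l', (α j l r - α j' l r) * (α j l' r - α j' l' r) * (q i l * q i l') := by
      intro i
      rw [e, e, ← Finset.sum_sub_distrib, sq, Finset.sum_mul_sum]
      exact Finset.sum_congr rfl fun _ _ => Finset.sum_congr rfl fun _ _ => by ring
    simp only [e2]
    rw [Finset.sum_comm]
    refine Finset.sum_congr rfl fun l _ => ?_
    rw [Finset.sum_comm]
    simp only [← Finset.mul_sum, hqq]
    simp [sq]
  refine (Finset.sum_le_sum fun r _ => hr r).trans (le_of_eq ?_)
  rw [Finset.sum_add_distrib, Finset.sum_const, Finset.card_univ, Fintype.card_fin, nsmul_eq_mul]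
  congr 1
  simp only [Finset.mul_sum, Finset.sum_mul]
  rw [Finset.sum_comm]
  rw [Finset.sum_comm (s := (Finset.univ : Finset (Fin (m - 1))))]
  refine Finset.sum_congr rfl fun j _ => ?_
  rw [Finset.sum_comm]
  rw [Finset.sum_comm (s := (Finset.univ : Finset (Fin (m - 1))))]
  refine Finset.sum_congr rfl fun j' _ => ?_
  rw [Finset.sum_comm]
  exact Finset.sum_congr rfl fun _ _ => Finset.sum_congr rfl fun _ _ => by ring
end

section
/- Under the construction of the preceding theorem (F^r with columns f^r_j = f¹_j + Σ_{l=1}^{m−1} α_{jlr} v_{d−l+1} built from a global minimizer (F¹, b¹) using orthonormal eigenvectors v_{d−l+1} of K for its m−1 smallest eigenvalues, with α_{jl1} = 0 and the columnwise orthogonality f^r_jᵀ f^s_j = 0 for r ≠ s): if the m−1 smallest eigenvalues of K all vanish, λ_{d−m+2} = ⋯ = λ_d = 0, then Σ_{r=1}^{m} L(F^r, b¹, D, y) = m·L*(D,y); i.e., each (F^r, b¹) is itself a global minimizer of the cross-entropy loss. -/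
open Matrix Finset Real

/-- If, in the multiverse construction, the `m-1` smallest eigenvalues of `K` all vanish,
then `∑_r L(F^r, b¹, D, y) = m·L*(D,y)`, and each `(F^r, b¹)` is itself a global
minimizer of the cross-entropy loss. -/
theorem multiverse_stmt10 {d n c m : ℕ} (hd : 0 < d) (hm : 0 < m) (hmd : m - 1 ≤ d)
    (D : Matrix (Fin d) (Fin n) ℝ) (y : Fin n → Fin c)
    (F1 : Matrix (Fin d) (Fin c) ℝ) (b1 : Fin c → ℝ)
    (hmin : ∀ (F : Matrix (Fin d) (Fin c) ℝ) (b : Fin c → ℝ),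
      celoss D y F1 b1 ≤ celoss D y F b)
    (w : Fin d → Fin d → ℝ) (μ : Fin d → ℝ)
    (horthw : ∀ k k' : Fin d, (∑ u : Fin d, w k u * w k' u) = if k = k' then 1 else 0)
    (heig : ∀ k : Fin d,
      (∑ i : Fin n, Matrix.vecMulVec (fun u => D u i) (fun u => D u i)) *ᵥ w k = μ k • w k)
    (hsorted : ∀ k k' : Fin d, k ≤ k' → μ k' ≤ μ k)
    (α : Fin c → Fin (m - 1) → Fin m → ℝ)
    (hα1 : ∀ (j : Fin c) (l : Fin (m - 1)), α j l ⟨0, hm⟩ = 0)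
    (F : Fin m → Matrix (Fin d) (Fin c) ℝ)
    (hF : ∀ (r : Fin m) (u : Fin d) (j : Fin c),
      F r u j = F1 u j + ∑ l : Fin (m - 1), α j l r * w (smallIdx hd l) u)
    (horthF : ∀ (j : Fin c) (r s : Fin m), r ≠ s →
      (∑ u : Fin d, F r u j * F s u j) = 0)
    -- the `m-1` smallest eigenvalues of `K` all vanish
    (hzero : ∀ l : Fin (m - 1), μ (smallIdx hd l) = 0) :
    (∑ r : Fin m, celoss D y (F r) b1 = (m : ℝ) * celoss D y F1 b1) ∧
    (∀ r : Fin m, ∀ (F' : Matrix (Fin d) (Fin c) ℝ) (b' : Fin c → ℝ),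
      celoss D y (F r) b1 ≤ celoss D y F' b') := by
  have key : ∀ (l : Fin (m - 1)) (i : Fin n), ∑ u : Fin d, D u i * w (smallIdx hd l) u = 0 := by
    intro l i
    have h := heig (smallIdx hd l)
    rw [hzero l, zero_smul] at h
    have h2 : ∑ i : Fin n, (∑ u : Fin d, D u i * w (smallIdx hd l) u) ^ 2 = 0 := by
      have h3 : w (smallIdx hd l) ⬝ᵥ
          ((∑ i : Fin n, Matrix.vecMulVec (fun u => D u i) (fun u => D u i)) *ᵥ
            w (smallIdx hd l)) = 0 := by
        rw [h, dotProduct_zero]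
      rw [Matrix.sum_mulVec, dotProduct_sum] at h3
      rw [← h3]
      refine Finset.sum_congr rfl fun i _ => ?_
      simp only [dotProduct, Matrix.mulVec, Matrix.vecMulVec_apply]
      rw [sq, Finset.sum_mul]
      refine Finset.sum_congr rfl fun u _ => ?_
      rw [Finset.mul_sum, Finset.mul_sum]
      refine Finset.sum_congr rfl fun v _ => ?_
      ring
    have h4 := (Finset.sum_eq_zero_iff_of_nonneg (fun i _ => sq_nonneg _)).1 h2 i
      (Finset.mem_univ i)
    exact pow_eq_zero_iff (two_ne_zero) |>.1 h4
  have hlog : ∀ (r : Fin m) (i : Fin n) (j : Fin c),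
      ∑ u : Fin d, D u i * F r u j = ∑ u : Fin d, D u i * F1 u j := by
    intro r i j
    simp only [hF, mul_add, Finset.sum_add_distrib, Finset.mul_sum]
    rw [Finset.sum_comm, add_eq_left]
    refine Finset.sum_eq_zero fun l _ => ?_
    have := key l i
    calc _ = α j l r * ∑ u : Fin d, D u i * w (smallIdx hd l) u := by
          rw [Finset.mul_sum]
          exact Finset.sum_congr rfl fun u _ => by ring
      _ = 0 := by rw [this, mul_zero]
  have hL : ∀ r : Fin m, celoss D y (F r) b1 = celoss D y F1 b1 := by
    intro r
    simp only [celoss, hlog]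
  refine ⟨?_, fun r F' b' => ?_⟩
  · simp [hL]
  · rw [hL]
    exact hmin F' b'
end

section
/- Let S_b and S_w be symmetric positive definite d×d matrices and let f¹,…,f^m ∈ ℝ^d be nonzero vectors that are S_w-orthogonal, i.e., f^{r}ᵀ S_w f^{s} = 0 for all r ≠ s. Suppose there is θ > 0 such that the Fisher ratio σ(f^r, S_b, S_w) = (f^{r}ᵀ S_b f^r)/(f^{r}ᵀ S_w f^r) ≥ θ for every r ∈ {1,…,m}. Then the sum of the Fisher spectrum satisfies Σ_{k=1}^{d} γ_k = tr(S_w^{-1} S_b) ≥ √m · θ, where γ_1,…,γ_d are the eigenvalues of S_b^{1/2} S_w^{-1} S_b^{1/2} (equivalently, the generalized eigenvalues of the pair (S_b, S_w)). -/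
open Matrix Finset Real
open scoped MatrixOrder Matrix.Norms.L2Operator

/-- If `f¹,…,f^m` are nonzero, pairwise `S_w`-orthogonal vectors whose Fisher ratios are
all at least `θ > 0`, then the sum of the Fisher spectrum,
`∑_k γ_k = tr(S_w⁻¹ S_b)`, is at least `√m · θ`. -/
theorem multiverse_stmt14 {d m : ℕ} (Sb Sw : Matrix (Fin d) (Fin d) ℝ)
    (hSb : Sb.PosDef) (hSw : Sw.PosDef)
    (f : Fin m → Fin d → ℝ) (hf : ∀ r, f r ≠ 0)
    (horth : ∀ r s : Fin m, r ≠ s → f r ⬝ᵥ (Sw *ᵥ f s) = 0)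
    (θ : ℝ) (hθ : 0 < θ)
    (hfish : ∀ r : Fin m, θ ≤ (f r ⬝ᵥ (Sb *ᵥ f r)) / (f r ⬝ᵥ (Sw *ᵥ f r))) :
    Real.sqrt m * θ ≤ (Sw⁻¹ * Sb).trace := by
  have hc : ∀ r, 0 < f r ⬝ᵥ (Sw *ᵥ f r) := fun r => by
    simpa using hSw.dotProduct_mulVec_pos (hf r)
  set P : Matrix (Fin d) (Fin d) ℝ :=
    ∑ r, (f r ⬝ᵥ (Sw *ᵥ f r))⁻¹ • vecMulVec (f r) (f r) with hP
  have hPH : Pᴴ = P := by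
    rw [hP, conjTranspose_sum]
    refine Finset.sum_congr rfl fun r _ => ?_
    ext i j
    simp [vecMulVec_apply, mul_comm]
  have hmul : ∀ r s, vecMulVec (f r) (f r) * (Sw * vecMulVec (f s) (f s))
      = (f r ⬝ᵥ (Sw *ᵥ f s)) • vecMulVec (f r) (f s) := fun r s => by
    rw [mul_vecMulVec, vecMulVec_mul_vecMulVec]
    ext i j
    simp [vecMulVec_apply]
    try ring
  have hPSP : P * (Sw * P) = P := by
    have h1 : P * (Sw * P) = ∑ r, ∑ s, (f r ⬝ᵥ (Sw *ᵥ f r))⁻¹ • (f s ⬝ᵥ (Sw *ᵥ f s))⁻¹ •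
        ((f r ⬝ᵥ (Sw *ᵥ f s)) • vecMulVec (f r) (f s)) := by
      simp_rw [← hmul]
      rw [hP, Finset.sum_mul]
      refine Finset.sum_congr rfl fun r _ => ?_
      rw [Finset.mul_sum, Finset.mul_sum]
      refine Finset.sum_congr rfl fun s _ => ?_
      rw [Matrix.smul_mul, Matrix.mul_smul, Matrix.mul_smul]
    rw [h1, hP]
    refine Finset.sum_congr rfl fun r _ => ?_
    rw [Finset.sum_eq_single r]
    · rw [smul_smul (f r ⬝ᵥ (Sw *ᵥ f r))⁻¹ (f r ⬝ᵥ (Sw *ᵥ f r)), inv_mul_cancel₀ (hc r).ne',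
        one_smul]
    · intro s _ hs
      rw [horth r s hs.symm]
      simp
    · simp
  have hdet : IsUnit Sw.det := hSw.det_pos.ne'.isUnit
  have hQH : (Sw⁻¹ - P)ᴴ = Sw⁻¹ - P := by
    rw [conjTranspose_sub, hPH, hSw.inv.isHermitian.eq]
  have hQ : (Sw⁻¹ - P).PosSemidef := by
    have h := hSw.posSemidef.conjTranspose_mul_mul_same (Sw⁻¹ - P)
    have e : (Sw⁻¹ - P)ᴴ * Sw * (Sw⁻¹ - P) = Sw⁻¹ - P := by
      rw [hQH, Matrix.sub_mul, Matrix.nonsing_inv_mul _ hdet, Matrix.mul_sub, Matrix.sub_mul,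
        Matrix.sub_mul, Matrix.mul_assoc P Sw Sw⁻¹, Matrix.mul_nonsing_inv _ hdet,
        Matrix.mul_assoc P Sw P, hPSP]
      simp
    rwa [e] at h
  have htr : 0 ≤ ((Sw⁻¹ - P) * Sb).trace := by
    obtain ⟨B, hB⟩ := CStarAlgebra.nonneg_iff_eq_star_mul_self.mp hSb.posSemidef.nonneg
    have h := (hQ.mul_mul_conjTranspose_same B).trace_nonneg
    rwa [Matrix.mul_assoc, Matrix.trace_mul_comm, Matrix.mul_assoc, ← star_eq_conjTranspose B, ← hB] at h
  have hPtr : (P * Sb).trace = ∑ r, (f r ⬝ᵥ (Sb *ᵥ f r)) / (f r ⬝ᵥ (Sw *ᵥ f r)) := by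
    rw [Matrix.trace_mul_comm, hP, Finset.mul_sum, Matrix.trace_sum]
    refine Finset.sum_congr rfl fun r _ => ?_
    rw [Matrix.mul_smul, Matrix.trace_smul, mul_vecMulVec, trace_vecMulVec, dotProduct_comm (Sb *ᵥ f r),
      smul_eq_mul, div_eq_inv_mul]
  have hsum : (m : ℝ) * θ ≤ (P * Sb).trace := by
    rw [hPtr]
    have := Finset.sum_le_sum fun r (_ : r ∈ Finset.univ) => hfish r
    simpa using this
  have hsq : Real.sqrt m ≤ m := by
    rw [Real.sqrt_le_left (Nat.cast_nonneg m)]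
    exact_mod_cast Nat.le_self_pow two_ne_zero m
  rw [Matrix.sub_mul, Matrix.trace_sub] at htr
  have := mul_le_mul_of_nonneg_right hsq hθ.le
  linarith
end
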